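/- arXiv:1511.05878 — 3 statements merged into one kernel-verified Lean document; each statement's English description precedes it below -/
import Mathlib

section
/- Let {Xₙ | n ∈ ℕ} be a collection of Polish spaces, and for each n ≥ 1 let π₍₀,ₙ₎ be a Borel probability measure on X₀ × Xₙ such that all the measures π₍₀,ₙ₎ have the same first marginal (i.e. the pushforward of π₍₀,ₙ₎ under the first projection is the same measure on X₀ for all n ≥ 1). Then there exists a Borel probability measure π on the countable product Π_{n ∈ ℕ} Xₙ such that for every n ≥ 1 the pushforward of π under the map (xₖ)ₖ ↦ (x₀, xₙ) equals π₍₀,ₙ₎. -/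
open MeasureTheory
open scoped ENNReal

/-!
Disintegrate each coupling `π i` along its first marginal `ν`, say `π i = ν ⊗ₘ κ i`. Draw a base
point from `ν` and, conditionally on it, draw all the other coordinates independently of each
other, the `i`-th one from `κ i`. The `i`-th coordinate together with the base point then has law
`ν ⊗ₘ κ i = π i`.
-/

open ProbabilityTheory

section Kernel

variable {ι S : Type*} {X : ι → Type*} [MeasurableSpace S] [∀ i, MeasurableSpace (X i)]

lemma measurable_infinitePi_kernel (κ : ∀ i, Kernel S (X i)) [∀ i, IsMarkovKernel (κ i)] :
    Measurable fun s ↦ Measure.infinitePi fun i ↦ κ i s := by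
  refine .measure_of_isPiSystem_of_isProbabilityMeasure generateFrom_squareCylinders.symm
    (isPiSystem_squareCylinders (fun _ ↦ MeasurableSpace.isPiSystem_measurableSet)
      fun _ ↦ .univ) ?_
  rintro _ ⟨I, t, ht, rfl⟩
  have ht' (i : ι) : MeasurableSet (t i) := ht i (Set.mem_univ i)
  simp_rw [Measure.infinitePi_pi _ fun i _ ↦ ht' i]
  exact Finset.measurable_prod _ fun i _ ↦ (κ i).measurable_coe (ht' i)

/-- The product `s ↦ ⨂ᵢ κ i s` of an arbitrary family of Markov kernels with a common source: given
`s`, the coordinates are drawn independently. It is the kernel version of `Measure.infinitePi`. -/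
noncomputable def infinitePiKernel (κ : ∀ i, Kernel S (X i)) [∀ i, IsMarkovKernel (κ i)] :
    Kernel S (∀ i, X i) where
  toFun s := Measure.infinitePi fun i ↦ κ i s
  measurable' := measurable_infinitePi_kernel κ

namespace infinitePiKernel

variable (κ : ∀ i, Kernel S (X i)) [∀ i, IsMarkovKernel (κ i)]

lemma apply (s : S) : infinitePiKernel κ s = Measure.infinitePi fun i ↦ κ i s := rfl

instance : IsMarkovKernel (infinitePiKernel κ) where
  isProbabilityMeasure s := by rw [apply]; infer_instance

lemma map_eval (i : ι) : (infinitePiKernel κ).map (fun x ↦ x i) = κ i := by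
  ext1 s
  rw [Kernel.map_apply _ (measurable_pi_apply i), apply, Measure.infinitePi_map_eval]

end infinitePiKernel

end Kernel

section Gluing

lemma exists_isMarkovKernel_fst_compProd_eq {S Y : Type*} [MeasurableSpace S] [MeasurableSpace Y]
    [StandardBorelSpace Y] (ρ : Measure (S × Y)) [IsFiniteMeasure ρ] [NeZero ρ] :
    ∃ κ : Kernel S Y, IsMarkovKernel κ ∧ ρ.fst ⊗ₘ κ = ρ :=
  have : Nonempty Y := ρ.nonempty_of_neZero.map Prod.snd
  ⟨ρ.condKernel, inferInstance, ρ.disintegrate _⟩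

variable {ι : Type*} {X : ι → Type*} [∀ i, MeasurableSpace (X i)]

theorem exists_measure_prod_pi_of_fst_eq {S : Type*} [MeasurableSpace S]
    [∀ i, StandardBorelSpace (X i)] (ν : Measure S) [IsFiniteMeasure ν]
    (π : ∀ i, Measure (S × X i)) (hπ : ∀ i, (π i).fst = ν) :
    ∃ ρ : Measure (S × ∀ i, X i), ρ.fst = ν ∧ ∀ i, ρ.map (fun p ↦ (p.1, p.2 i)) = π i := by
  obtain rfl | hν := eq_or_ne ν 0
  · refine ⟨0, by simp, fun i ↦ ?_⟩
    rw [Measure.map_zero, (Measure.map_eq_zero_iff measurable_fst.aemeasurable).1 (hπ i)]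
  have hκ (i : ι) : ∃ κ : Kernel S (X i), IsMarkovKernel κ ∧ ν ⊗ₘ κ = π i := by
    have : IsFiniteMeasure ((π i).map Prod.fst) := by rwa [← Measure.fst, hπ i]
    have : IsFiniteMeasure (π i) := Measure.isFiniteMeasure_of_map measurable_fst.aemeasurable
    have : NeZero (π i) := ⟨fun h ↦ hν <| by rw [← hπ i, h, Measure.fst_zero]⟩
    exact hπ i ▸ exists_isMarkovKernel_fst_compProd_eq (π i)
  choose κ _ hκπ using hκ
  refine ⟨ν ⊗ₘ infinitePiKernel κ, Measure.fst_compProd _ _, fun i ↦ ?_⟩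
  calc (ν ⊗ₘ infinitePiKernel κ).map (Prod.map id fun x ↦ x i)
      = ν ⊗ₘ (infinitePiKernel κ).map (fun x ↦ x i) :=
        (Measure.compProd_map (measurable_pi_apply i)).symm
    _ = π i := by rw [infinitePiKernel.map_eval, hκπ]

lemma measurable_piSplitAt_symm [DecidableEq ι] (i₀ : ι) :
    Measurable (Equiv.piSplitAt i₀ X).symm := by
  refine measurable_pi_lambda _ fun i ↦ ?_
  obtain rfl | hi := eq_or_ne i i₀
  · simpa using measurable_fst
  · have h_eval : Measurable fun p : X i₀ × (∀ j : {j // j ≠ i₀}, X j) ↦ p.2 ⟨i, hi⟩ := by fun_prop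
    simpa [hi] using h_eval

theorem glue_countably_many_general (i₀ : ι) (hX : ∀ i ≠ i₀, StandardBorelSpace (X i))
    (ν : Measure (X i₀)) [IsFiniteMeasure ν] (π : ∀ i, Measure (X i₀ × X i))
    (hπ : ∀ i ≠ i₀, (π i).fst = ν) :
    ∃ μ : Measure (∀ i, X i), μ.map (fun x ↦ x i₀) = ν ∧
      ∀ i ≠ i₀, μ.map (fun x ↦ (x i₀, x i)) = π i := by
  classical
  have (i : {i // i ≠ i₀}) : StandardBorelSpace (X i) := hX i i.2
  obtain ⟨ρ, hρν, hρπ⟩ := exists_measure_prod_pi_of_fst_eq ν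
    (fun i : {i // i ≠ i₀} ↦ π i) fun i ↦ hπ i i.2
  have he := measurable_piSplitAt_symm (X := X) i₀
  refine ⟨ρ.map (Equiv.piSplitAt i₀ X).symm, ?_, fun i hi ↦ ?_⟩
  · rw [Measure.map_map (by fun_prop) he, ← hρν, Measure.fst]
    congr 1
    ext p
    simp
  · rw [Measure.map_map (by fun_prop) he, ← hρπ ⟨i, hi⟩]
    congr 1
    ext p <;> simp [hi]

end Gluing

/-- Let `{Xₙ | n ∈ ℕ}` be a collection of Polish spaces and for each
`n ≥ 1` let `π n` be a Borel probability measure on `X 0 × X n`, all having the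
same first marginal. Then there exists a Borel probability measure on the countable
product `Π n, X n` whose pushforward under `(x k)ₖ ↦ (x 0, x n)` equals `π n` for
every `n ≥ 1`. -/
theorem glue_countably_many
    {X : ℕ → Type*}
    [∀ n, TopologicalSpace (X n)] [∀ n, PolishSpace (X n)]
    [∀ n, MeasurableSpace (X n)] [∀ n, BorelSpace (X n)]
    (π : (n : ℕ) → Measure (X 0 × X n))
    (hprob : ∀ n, 1 ≤ n → IsProbabilityMeasure (π n))
    (hcons : ∀ n m, 1 ≤ n → 1 ≤ m →
      Measure.map Prod.fst (π n) = Measure.map Prod.fst (π m)) :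
    ∃ μ : Measure (∀ n, X n), IsProbabilityMeasure μ ∧
      ∀ n, 1 ≤ n → Measure.map (fun x => (x 0, x n)) μ = π n := by
  have := hprob 1 le_rfl
  obtain ⟨μ, hμ₀, hμ⟩ := glue_countably_many_general 0 (fun _ _ ↦ inferInstance) (π 1).fst π
    fun n hn ↦ hcons n 1 (Nat.one_le_iff_ne_zero.2 hn) le_rfl
  have : IsProbabilityMeasure (μ.map fun x ↦ x 0) := hμ₀ ▸ inferInstance
  exact ⟨μ, Measure.isProbabilityMeasure_of_map fun x ↦ x 0,
    fun n hn ↦ hμ n (Nat.one_le_iff_ne_zero.1 hn)⟩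
end

section
/- Assume that for every Borel probability measure μ on X × X × X there exists a Borel-measurable map ζ : Ω → X × X × X whose law is μ. Let d be a probability metric on R(X). Then the minimal probability metric d̂ is a simple probability metric: d̂(ξ, ξ) = 0 for all ξ, d̂ is symmetric, d̂ satisfies the triangle inequality d̂(ξ, η) ≤ d̂(ξ, ζ) + d̂(ζ, η) for all ξ, η, ζ ∈ R(X), d̂ satisfies (PM), and L(ξ) = L(ξ′) implies d̂(ξ, ξ′) = 0. -/
open MeasureTheory
open scoped ENNReal

/-- The minimal probability metric associated with `d`:
`d̂(ξ, η) = inf { d(ξ′, η′) | ξ′, η′ measurable, L(ξ′) = L(ξ), L(η′) = L(η) }`. -/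
noncomputable def minPM {Ω X : Type*} [MeasurableSpace Ω] [MeasurableSpace X]
    (P : Measure Ω) (d : (Ω → X) → (Ω → X) → ℝ≥0∞) (ξ η : Ω → X) : ℝ≥0∞ :=
  ⨅ (ξ' : Ω → X) (η' : Ω → X) (_ : Measurable ξ') (_ : Measurable η')
    (_ : Measure.map ξ' P = Measure.map ξ P) (_ : Measure.map η' P = Measure.map η P),
    d ξ' η'

/-!
The triangle inequality rests on gluing: if `(ξ, ζ)` and `(ζ', η)` are pairs with
`L(ζ) = L(ζ')`, disintegrating `L(ξ, ζ)` over its second marginal gives a law on `X × X × X` whose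
two consecutive pair marginals are `L(ξ, ζ)` and `L(ζ', η)`. Realizing it on `Ω` as the law of
`(x, z, y)` turns the triangle inequality for `d` into
`d̂(ξ, η) ≤ d(x, y) ≤ d(x, z) + d(z, y) = d(ξ, ζ) + d(ζ', η)`, and taking infima over both pairs
concludes.
-/

section Gluing

open ProbabilityTheory

variable {α β γ Ω : Type*} [MeasurableSpace α] [MeasurableSpace β] [MeasurableSpace γ]
  [MeasurableSpace Ω]

lemma map_prodMap_compProd_comap (μ : Measure α) [SFinite μ] (κ : Kernel β γ) [IsSFiniteKernel κ]
    {f : α → β} (hf : Measurable f) :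
    (μ ⊗ₘ κ.comap f hf).map (Prod.map f id) = μ.map f ⊗ₘ κ := by
  ext s hs
  have hfid : Measurable (Prod.map f (id : γ → γ)) := hf.prodMap measurable_id
  rw [Measure.map_apply hfid hs, Measure.compProd_apply (hfid hs), Measure.compProd_apply hs,
    lintegral_map (Kernel.measurable_kernel_prodMk_left hs) hf]
  rfl

lemma exists_measure_gluing [StandardBorelSpace α] [Nonempty α] {μ : Measure (α × β)}
    [IsFiniteMeasure μ] {ν : Measure (β × γ)} [SFinite ν] (h : μ.snd = ν.fst) :
    ∃ ρ : Measure (α × β × γ), ρ.map (Prod.map id Prod.fst) = μ ∧ ρ.snd = ν := by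
  let κ : Kernel β α := (μ.map Prod.swap).condKernel
  have hκ : ν.fst ⊗ₘ κ = μ.map Prod.swap := by
    rw [← h, ← Measure.fst_map_swap, Measure.disintegrate]
  refine ⟨(ν ⊗ₘ κ.comap Prod.fst measurable_fst).map Prod.swap, ?_, ?_⟩
  · have hswap : Prod.map id Prod.fst ∘ Prod.swap =
        Prod.swap ∘ Prod.map (Prod.fst : β × γ → β) (id : α → α) := rfl
    rw [Measure.map_map (by fun_prop) measurable_swap, hswap,
      ← Measure.map_map measurable_swap (by fun_prop), map_prodMap_compProd_comap, ← Measure.fst,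
      hκ, Measure.map_map measurable_swap measurable_swap, Prod.swap_swap_eq, Measure.map_id]
  · rw [Measure.snd_map_swap, Measure.fst_compProd]

lemma exists_gluing [StandardBorelSpace α] {P : Measure Ω} [IsProbabilityMeasure P]
    (hrich : ∀ μ : Measure (α × β × γ), IsProbabilityMeasure μ →
      ∃ ζ : Ω → α × β × γ, Measurable ζ ∧ P.map ζ = μ)
    {ξ : Ω → α} {ζ ζ' : Ω → β} {η : Ω → γ} (hξ : Measurable ξ) (hζ' : Measurable ζ')
    (hη : Measurable η) (h : P.map ζ = P.map ζ') :
    ∃ (x : Ω → α) (z : Ω → β) (y : Ω → γ), Measurable x ∧ Measurable z ∧ Measurable y ∧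
      P.map (fun ω ↦ (x ω, z ω)) = P.map (fun ω ↦ (ξ ω, ζ ω)) ∧
      P.map (fun ω ↦ (z ω, y ω)) = P.map (fun ω ↦ (ζ' ω, η ω)) := by
  have : Nonempty α := P.nonempty_of_neZero.map ξ
  have hmarginal : (P.map fun ω ↦ (ξ ω, ζ ω)).snd = (P.map fun ω ↦ (ζ' ω, η ω)).fst := by
    rw [Measure.snd_map_prodMk hξ, Measure.fst_map_prodMk hη, h]
  obtain ⟨ρ, hρ_left, hρ_right⟩ := exists_measure_gluing hmarginal
  have : IsProbabilityMeasure (ρ.map Prod.snd) := by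
    rw [← Measure.snd, hρ_right]
    exact Measure.isProbabilityMeasure_map (hζ'.prodMk hη).aemeasurable
  obtain ⟨w, hw, rfl⟩ := hrich ρ (Measure.isProbabilityMeasure_of_map Prod.snd)
  rw [Measure.map_map (by fun_prop) hw] at hρ_left
  rw [Measure.snd, Measure.map_map measurable_snd hw] at hρ_right
  exact ⟨fun ω ↦ (w ω).1, fun ω ↦ (w ω).2.1, fun ω ↦ (w ω).2.2, by fun_prop, by fun_prop,
    by fun_prop, hρ_left, hρ_right⟩

end Gluing

section MinPM

variable {Ω X : Type*} [MeasurableSpace Ω] [MeasurableSpace X] {P : Measure Ω}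
  {d : (Ω → X) → (Ω → X) → ℝ≥0∞} {ξ η ζ ζ' ξ' η' : Ω → X}

lemma minPM_le (hξ' : Measurable ξ') (hη' : Measurable η') (hξ : P.map ξ' = P.map ξ)
    (hη : P.map η' = P.map η) : minPM P d ξ η ≤ d ξ' η' :=
  iInf₂_le_of_le ξ' η' <| iInf₂_le_of_le hξ' hη' <| iInf₂_le hξ hη

lemma minPM_congr (hξ : P.map ξ = P.map ξ') (hη : P.map η = P.map η') :
    minPM P d ξ η = minPM P d ξ' η' := by
  simp only [minPM, hξ, hη]

lemma minPM_congr_of_map_prodMk_eq (hξ : Measurable ξ) (hη : Measurable η)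
    (hξ' : Measurable ξ') (hη' : Measurable η')
    (h : P.map (fun ω ↦ (ξ ω, η ω)) = P.map (fun ω ↦ (ξ' ω, η' ω))) :
    minPM P d ξ η = minPM P d ξ' η' := by
  have hfst := congrArg Measure.fst h
  have hsnd := congrArg Measure.snd h
  rw [Measure.fst_map_prodMk hη, Measure.fst_map_prodMk hη'] at hfst
  rw [Measure.snd_map_prodMk hξ, Measure.snd_map_prodMk hξ'] at hsnd
  exact minPM_congr hfst hsnd

lemma minPM_eq_zero_of_map_eq (hrefl : d ξ ξ = 0) (hξ : Measurable ξ)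
    (h : P.map ξ = P.map ξ') : minPM P d ξ ξ' = 0 :=
  nonpos_iff_eq_zero.1 <| (minPM_le hξ hξ rfl h).trans_eq hrefl

lemma minPM_comm (hsymm : ∀ ξ η, Measurable ξ → Measurable η → d ξ η = d η ξ) (ξ η : Ω → X) :
    minPM P d ξ η = minPM P d η ξ := by
  suffices hle : ∀ ξ η, minPM P d ξ η ≤ minPM P d η ξ from (hle ξ η).antisymm (hle η ξ)
  refine fun ξ η ↦ le_iInf₂ fun η' ξ' ↦ le_iInf₂ fun hη' hξ' ↦ le_iInf₂ fun hη hξ ↦ ?_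
  exact (minPM_le hξ' hη' hξ hη).trans_eq (hsymm ξ' η' hξ' hη')

lemma minPM_le_add_of_map_eq [StandardBorelSpace X] [IsProbabilityMeasure P]
    (hrich : ∀ μ : Measure (X × X × X), IsProbabilityMeasure μ →
      ∃ ζ : Ω → X × X × X, Measurable ζ ∧ P.map ζ = μ)
    (htri : ∀ ξ η ζ, Measurable ξ → Measurable η → Measurable ζ → d ξ η ≤ d ξ ζ + d ζ η)
    (hPM : ∀ ξ η ξ' η' : Ω → X, Measurable ξ → Measurable η → Measurable ξ' → Measurable η' →
      P.map (fun ω ↦ (ξ ω, η ω)) = P.map (fun ω ↦ (ξ' ω, η' ω)) → d ξ η = d ξ' η')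
    (hξ : Measurable ξ) (hζ : Measurable ζ) (hζ' : Measurable ζ') (hη : Measurable η)
    (h : P.map ζ = P.map ζ') : minPM P d ξ η ≤ d ξ ζ + d ζ' η := by
  obtain ⟨x, z, y, hx, hz, hy, hxz, hzy⟩ := exists_gluing hrich hξ hζ' hη h
  have hxξ : P.map x = P.map ξ := by
    simpa only [Measure.fst_map_prodMk hz, Measure.fst_map_prodMk hζ] using
      congrArg Measure.fst hxz
  have hyη : P.map y = P.map η := by
    simpa only [Measure.snd_map_prodMk hz, Measure.snd_map_prodMk hζ'] using
      congrArg Measure.snd hzy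
  calc
    minPM P d ξ η ≤ d x y := minPM_le hx hy hxξ hyη
    _ ≤ d x z + d z y := htri x y z hx hy hz
    _ = d ξ ζ + d ζ' η := by
      rw [hPM x z ξ ζ hx hz hξ hζ hxz, hPM z y ζ' η hz hy hζ' hη hzy]

lemma minPM_triangle [StandardBorelSpace X] [IsProbabilityMeasure P]
    (hrich : ∀ μ : Measure (X × X × X), IsProbabilityMeasure μ →
      ∃ ζ : Ω → X × X × X, Measurable ζ ∧ P.map ζ = μ)
    (htri : ∀ ξ η ζ, Measurable ξ → Measurable η → Measurable ζ → d ξ η ≤ d ξ ζ + d ζ η)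
    (hPM : ∀ ξ η ξ' η' : Ω → X, Measurable ξ → Measurable η → Measurable ξ' → Measurable η' →
      P.map (fun ω ↦ (ξ ω, η ω)) = P.map (fun ω ↦ (ξ' ω, η' ω)) → d ξ η = d ξ' η')
    (ξ η ζ : Ω → X) : minPM P d ξ η ≤ minPM P d ξ ζ + minPM P d ζ η := by
  refine ENNReal.le_iInf₂_add_iInf₂ fun ξ' ζ₁ ζ₂ η' ↦ ENNReal.le_iInf₂_add_iInf₂
    fun hξ' hζ₁ hζ₂ hη' ↦ ENNReal.le_iInf₂_add_iInf₂ fun hξ hζ₁ζ hζ₂ζ hη ↦ ?_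
  rw [← minPM_congr hξ hη]
  exact minPM_le_add_of_map_eq hrich htri hPM hξ' hζ₁ hζ₂ hη' (hζ₁ζ.trans hζ₂ζ.symm)

end MinPM

/-- Assume that every Borel probability measure on `X × X × X` is the
law of some random variable `Ω → X × X × X`. If `d` is a probability metric on
`R(X)`, then the minimal probability metric `d̂` is a simple probability metric. -/
theorem minPM_isSimpleProbMetric
    {Ω X : Type*} [MeasurableSpace Ω]
    [TopologicalSpace X] [PolishSpace X] [MeasurableSpace X] [BorelSpace X]
    (P : Measure Ω) [IsProbabilityMeasure P]
    (hrich : ∀ μ : Measure (X × X × X), IsProbabilityMeasure μ →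
      ∃ ζ : Ω → X × X × X, Measurable ζ ∧ Measure.map ζ P = μ)
    (d : (Ω → X) → (Ω → X) → ℝ≥0∞)
    (hrefl : ∀ ξ : Ω → X, Measurable ξ → d ξ ξ = 0)
    (hsymm : ∀ ξ η : Ω → X, Measurable ξ → Measurable η → d ξ η = d η ξ)
    (htri : ∀ ξ η ζ : Ω → X, Measurable ξ → Measurable η → Measurable ζ →
      d ξ η ≤ d ξ ζ + d ζ η)
    (hPM : ∀ ξ η ξ' η' : Ω → X, Measurable ξ → Measurable η →
      Measurable ξ' → Measurable η' →
      Measure.map (fun ω => (ξ ω, η ω)) P = Measure.map (fun ω => (ξ' ω, η' ω)) P →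
      d ξ η = d ξ' η') :
    (∀ ξ : Ω → X, Measurable ξ → minPM P d ξ ξ = 0) ∧
    (∀ ξ η : Ω → X, Measurable ξ → Measurable η → minPM P d ξ η = minPM P d η ξ) ∧
    (∀ ξ η ζ : Ω → X, Measurable ξ → Measurable η → Measurable ζ →
      minPM P d ξ η ≤ minPM P d ξ ζ + minPM P d ζ η) ∧
    (∀ ξ η ξ' η' : Ω → X, Measurable ξ → Measurable η →
      Measurable ξ' → Measurable η' →
      Measure.map (fun ω => (ξ ω, η ω)) P = Measure.map (fun ω => (ξ' ω, η' ω)) P →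
      minPM P d ξ η = minPM P d ξ' η') ∧
    (∀ ξ ξ' : Ω → X, Measurable ξ → Measurable ξ' →
      Measure.map ξ P = Measure.map ξ' P → minPM P d ξ ξ' = 0) :=
  ⟨fun ξ hξ ↦ minPM_eq_zero_of_map_eq (hrefl ξ hξ) hξ rfl,
    fun ξ η _ _ ↦ minPM_comm hsymm ξ η,
    fun ξ η ζ _ _ _ ↦ minPM_triangle hrich htri hPM ξ η ζ,
    fun _ _ _ _ hξ hη hξ' hη' h ↦ minPM_congr_of_map_prodMk_eq hξ hη hξ' hη' h,
    fun ξ _ hξ _ h ↦ minPM_eq_zero_of_map_eq (hrefl ξ hξ) hξ h⟩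
end

section
/- Assume that for every Borel probability measure μ on the countable product ℕ → X there exists a Borel-measurable map ζ : Ω → (ℕ → X) whose law is μ. Let d be a probability metric on R(X), let ξ ∈ R(X) and let (ξₙ)ₙ be a sequence in R(X). Then lim_{n→∞} d̂(ξ, ξₙ) = 0 if and only if there exist ξ′ ∈ R(X) and a sequence (ξₙ′)ₙ in R(X) such that L(ξ′) = L(ξ), L(ξₙ′) = L(ξₙ) for all n, and lim_{n→∞} d(ξ′, ξₙ′) = 0. -/
/-!
Near-optimal pairs for `d̂(ξ, ξₙ)` all have the law of `ξ` as first marginal. Disintegrating each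
pair over this marginal and driving all the conditional laws by one common uniform variable glues
the pairs into a single law on `X × (ℕ → X)`. A random variable with this law realizes all the
pairs at once, and by (PM) the value of `d` on each pair is unchanged.
-/

open MeasureTheory Filter
open scoped ENNReal Topology

open ProbabilityTheory

section Gluing

variable {ι X : Type*} {Y : ι → Type*} [MeasurableSpace X] [∀ i, MeasurableSpace (Y i)]
  [∀ i, StandardBorelSpace (Y i)] [∀ i, Nonempty (Y i)]

theorem exists_markovKernel_pi_map_eval_eq (κ : ∀ i, Kernel X (Y i)) [∀ i, IsMarkovKernel (κ i)] :
    ∃ η : Kernel X (∀ i, Y i), IsMarkovKernel η ∧ ∀ i, η.map (Function.eval i) = κ i := by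
  -- `κ i x` is the law of `f i x u` for uniform `u`; sharing `u` puts all kernels on one space.
  choose f hf hfκ using fun i => (κ i).exists_measurable_map_eq_unitInterval
  let F : X × unitInterval → ∀ i, Y i := fun p i => f i p.1 p.2
  have hF : Measurable F := measurable_pi_lambda F hf
  refine ⟨(Kernel.id ×ₖ Kernel.const X volume).map F, Kernel.IsMarkovKernel.map _ hF, fun i => ?_⟩
  ext1 x
  calc (((Kernel.id ×ₖ Kernel.const X volume).map F).map (Function.eval i)) x
      = ((Measure.dirac x).prod volume).map (Function.uncurry (f i)) := by
        rw [← Kernel.map_comp_right _ hF (measurable_pi_apply i),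
          Kernel.map_apply _ ((measurable_pi_apply i).comp hF), Kernel.prod_apply,
          Kernel.id_apply, Kernel.const_apply]
        rfl
    _ = volume.map (f i x) := by
        rw [Measure.dirac_prod, Measure.map_map (hf i) measurable_prodMk_left]
        rfl
    _ = κ i x := hfκ i x

theorem exists_measure_prod_pi_map_eval_eq {μ : Measure X} [IsFiniteMeasure μ]
    {ρ : ∀ i, Measure (X × Y i)} (hρ : ∀ i, (ρ i).fst = μ) :
    ∃ π : Measure (X × ∀ i, Y i),
      π.fst = μ ∧ ∀ i, π.map (Prod.map id (Function.eval i)) = ρ i := by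
  have hfin (i : ι) : IsFiniteMeasure (ρ i) :=
    ⟨by rw [← Measure.fst_univ, hρ i]; exact measure_lt_top μ _⟩
  obtain ⟨η, hη, hηρ⟩ := exists_markovKernel_pi_map_eval_eq fun i => (ρ i).condKernel
  refine ⟨μ ⊗ₘ η, Measure.fst_compProd μ η, fun i => ?_⟩
  rw [← Measure.compProd_map (measurable_pi_apply i), hηρ i, ← hρ i, Measure.disintegrate]

end Gluing

section Realization

variable {Ω : Type*} [MeasurableSpace Ω] {P : Measure Ω}

/-- Richness of the probability space `(Ω, P)` with respect to `Z`: every probability measure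
on `Z` is the law of some `Z`-valued random variable on `Ω`. -/
def RealizesAllLaws (P : Measure Ω) (Z : Type*) [MeasurableSpace Z] : Prop :=
  ∀ μ : Measure Z, IsProbabilityMeasure μ → ∃ ζ : Ω → Z, Measurable ζ ∧ P.map ζ = μ

theorem RealizesAllLaws.of_leftInverse {Z W : Type*} [MeasurableSpace Z] [MeasurableSpace W]
    (h : RealizesAllLaws P Z) {f : W → Z} {g : Z → W} (hf : Measurable f) (hg : Measurable g)
    (hgf : Function.LeftInverse g f) : RealizesAllLaws P W := by
  intro μ _
  obtain ⟨ζ, hζ, hζμ⟩ := h (μ.map f) (Measure.isProbabilityMeasure_map hf.aemeasurable)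
  refine ⟨g ∘ ζ, hg.comp hζ, ?_⟩
  rw [← Measure.map_map hg hζ, hζμ, Measure.map_map hg hf, hgf.comp_eq_id, Measure.map_id]

theorem RealizesAllLaws.prod_pi_nat {X : Type*} [MeasurableSpace X]
    (h : RealizesAllLaws P (ℕ → X)) : RealizesAllLaws P (X × (ℕ → X)) := by
  let cons : X × (ℕ → X) → ℕ → X := fun p k => Nat.casesOn k p.1 p.2
  have hcons : Measurable cons := by
    refine measurable_pi_lambda cons fun k => ?_
    cases k with
    | zero => exact measurable_fst
    | succ n => exact (measurable_pi_apply n).comp measurable_snd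
  exact h.of_leftInverse (g := fun z => (z 0, fun n => z (n + 1))) hcons (by fun_prop)
    fun _ => rfl

theorem RealizesAllLaws.exists_map_prodMk_eq {ι X : Type*} {Y : ι → Type*} [MeasurableSpace X]
    [∀ i, MeasurableSpace (Y i)] [∀ i, StandardBorelSpace (Y i)] [∀ i, Nonempty (Y i)]
    (h : RealizesAllLaws P (X × ∀ i, Y i)) {μ : Measure X} [IsProbabilityMeasure μ]
    {ρ : ∀ i, Measure (X × Y i)} (hρ : ∀ i, (ρ i).fst = μ) :
    ∃ (ξ : Ω → X) (η : ∀ i, Ω → Y i), Measurable ξ ∧ (∀ i, Measurable (η i)) ∧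
      P.map ξ = μ ∧ ∀ i, P.map (fun ω => (ξ ω, η i ω)) = ρ i := by
  obtain ⟨π, hπμ, hπρ⟩ := exists_measure_prod_pi_map_eval_eq hρ
  have hπ : IsProbabilityMeasure π := ⟨by rw [← Measure.fst_univ, hπμ, measure_univ]⟩
  obtain ⟨ζ, hζ, hζπ⟩ := h π hπ
  refine ⟨fun ω => (ζ ω).1, fun i ω => (ζ ω).2 i, by fun_prop, fun i => by fun_prop, ?_,
    fun i => ?_⟩
  · rw [← hπμ, ← hζπ, Measure.fst, Measure.map_map measurable_fst hζ]
    rfl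
  · rw [← hπρ i, ← hζπ,
      Measure.map_map (measurable_id.prodMap (measurable_pi_apply i)) hζ]
    rfl

end Realization

section MinPM

variable {Ω X : Type*} [MeasurableSpace Ω] [MeasurableSpace X] {P : Measure Ω}
  {d : (Ω → X) → (Ω → X) → ℝ≥0∞}

/-- Condition (PM): on random variables, `d` is a function of the joint law of its arguments. -/
def DependsOnJointLaw (P : Measure Ω) (d : (Ω → X) → (Ω → X) → ℝ≥0∞) : Prop :=
  ∀ ξ η ξ' η' : Ω → X, Measurable ξ → Measurable η → Measurable ξ' → Measurable η' →
    P.map (fun ω => (ξ ω, η ω)) = P.map (fun ω => (ξ' ω, η' ω)) → d ξ η = d ξ' η'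

theorem minPM_le_of_map_eq {ξ η ξ' η' : Ω → X} (hξ' : Measurable ξ') (hη' : Measurable η')
    (hξ : P.map ξ' = P.map ξ) (hη : P.map η' = P.map η) : minPM P d ξ η ≤ d ξ' η' :=
  iInf₂_le_of_le ξ' η' <| iInf₂_le_of_le hξ' hη' <| iInf₂_le hξ hη

theorem exists_le_minPM_add {ξ η : Ω → X} (hξ : Measurable ξ) (hη : Measurable η) {ε : ℝ≥0∞}
    (hε : ε ≠ 0) :
    ∃ ξ' η' : Ω → X, Measurable ξ' ∧ Measurable η' ∧ P.map ξ' = P.map ξ ∧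
      P.map η' = P.map η ∧ d ξ' η' ≤ minPM P d ξ η + ε := by
  by_cases h : minPM P d ξ η = ∞
  · exact ⟨ξ, η, hξ, hη, rfl, rfl, by simp [h]⟩
  · have hlt : minPM P d ξ η < minPM P d ξ η + ε := ENNReal.lt_add_right h hε
    conv_lhs at hlt => rw [minPM]
    simp only [iInf_lt_iff] at hlt
    obtain ⟨ξ', η', hξ', hη', hξlaw, hηlaw, hd⟩ := hlt
    exact ⟨ξ', η', hξ', hη', hξlaw, hηlaw, hd.le⟩

theorem DependsOnJointLaw.exists_forall_le_minPM_add {ι : Type*} [StandardBorelSpace X]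
    [IsProbabilityMeasure P] (hd : DependsOnJointLaw P d)
    (hrich : RealizesAllLaws P (X × (ι → X))) {ξ : Ω → X} (hξ : Measurable ξ) {η : ι → Ω → X}
    (hη : ∀ i, Measurable (η i)) {ε : ι → ℝ≥0∞} (hε : ∀ i, ε i ≠ 0) :
    ∃ (ξ' : Ω → X) (η' : ι → Ω → X), Measurable ξ' ∧ (∀ i, Measurable (η' i)) ∧
      P.map ξ' = P.map ξ ∧ (∀ i, P.map (η' i) = P.map (η i)) ∧
      ∀ i, d ξ' (η' i) ≤ minPM P d ξ (η i) + ε i := by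
  have : Nonempty X := (nonempty_of_isProbabilityMeasure P).map ξ
  have : IsProbabilityMeasure (P.map ξ) := Measure.isProbabilityMeasure_map hξ.aemeasurable
  choose a b ha hb haξ hbη hab using
    fun i => exists_le_minPM_add (P := P) (d := d) hξ (hη i) (hε i)
  obtain ⟨ξ', η', hξ', hη', hξlaw, hpair⟩ := hrich.exists_map_prodMk_eq
    (ρ := fun i => P.map fun ω => (a i ω, b i ω))
    fun i => (Measure.fst_map_prodMk (hb i)).trans (haξ i)
  refine ⟨ξ', η', hξ', hη', hξlaw, fun i => ?_, fun i => ?_⟩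
  · calc P.map (η' i) = (P.map fun ω => (ξ' ω, η' i ω)).snd := (Measure.snd_map_prodMk hξ').symm
      _ = P.map (b i) := by rw [hpair i, Measure.snd_map_prodMk (ha i)]
      _ = P.map (η i) := hbη i
  · exact (hd _ _ _ _ hξ' (hη' i) (ha i) (hb i) (hpair i)).trans_le (hab i)

end MinPM

theorem tendsto_minPM_zero_iff_general {Ω X : Type*} [MeasurableSpace Ω] [MeasurableSpace X]
    [StandardBorelSpace X] {P : Measure Ω} [IsProbabilityMeasure P]
    (hrich : RealizesAllLaws P (ℕ → X)) {d : (Ω → X) → (Ω → X) → ℝ≥0∞}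
    (hd : DependsOnJointLaw P d) {ξ : Ω → X} (hξ : Measurable ξ) {ξs : ℕ → Ω → X}
    (hξs : ∀ n, Measurable (ξs n)) :
    Tendsto (fun n => minPM P d ξ (ξs n)) atTop (𝓝 0) ↔
    ∃ (ξ' : Ω → X) (ξs' : ℕ → Ω → X), Measurable ξ' ∧ (∀ n, Measurable (ξs' n)) ∧
      P.map ξ' = P.map ξ ∧ (∀ n, P.map (ξs' n) = P.map (ξs n)) ∧
      Tendsto (fun n => d ξ' (ξs' n)) atTop (𝓝 0) := by
  constructor
  · intro hlim
    obtain ⟨ξ', ξs', hξ', hξs', hξlaw, hξslaw, hle⟩ :=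
      hd.exists_forall_le_minPM_add hrich.prod_pi_nat hξ hξs (ε := fun n : ℕ => (n : ℝ≥0∞)⁻¹)
        fun n => ENNReal.inv_ne_zero.2 (ENNReal.natCast_ne_top n)
    have hlim_add : Tendsto (fun n => minPM P d ξ (ξs n) + (n : ℝ≥0∞)⁻¹) atTop (𝓝 0) := by
      simpa using hlim.add ENNReal.tendsto_inv_nat_nhds_zero
    exact ⟨ξ', ξs', hξ', hξs', hξlaw, hξslaw,
      tendsto_const_nhds.squeeze hlim_add (fun _ => zero_le) hle⟩
  · rintro ⟨ξ', ξs', hξ', hξs', hξlaw, hξslaw, hlim⟩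
    exact tendsto_const_nhds.squeeze hlim (fun _ => zero_le)
      fun n => minPM_le_of_map_eq hξ' (hξs' n) hξlaw (hξslaw n)

/-- Assume every Borel probability measure on `ℕ → X` is the law of
some random variable. Let `d` be a probability metric on `R(X)`, `ξ ∈ R(X)` and
`(ξₙ)ₙ` a sequence in `R(X)`. Then `d̂(ξ, ξₙ) → 0` iff there exist representatives
`ξ′, (ξₙ′)ₙ` with `L(ξ′) = L(ξ)`, `L(ξₙ′) = L(ξₙ)` and `d(ξ′, ξₙ′) → 0`. -/
theorem tendsto_minPM_zero_iff
    {Ω X : Type*} [MeasurableSpace Ω]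
    [TopologicalSpace X] [PolishSpace X] [MeasurableSpace X] [BorelSpace X]
    (P : Measure Ω) [IsProbabilityMeasure P]
    (hrich : ∀ μ : Measure (ℕ → X), IsProbabilityMeasure μ →
      ∃ ζ : Ω → ℕ → X, Measurable ζ ∧ Measure.map ζ P = μ)
    (d : (Ω → X) → (Ω → X) → ℝ≥0∞)
    (hrefl : ∀ ξ : Ω → X, Measurable ξ → d ξ ξ = 0)
    (hsymm : ∀ ξ η : Ω → X, Measurable ξ → Measurable η → d ξ η = d η ξ)
    (htri : ∀ ξ η ζ : Ω → X, Measurable ξ → Measurable η → Measurable ζ →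
      d ξ η ≤ d ξ ζ + d ζ η)
    (hPM : ∀ ξ η ξ' η' : Ω → X, Measurable ξ → Measurable η →
      Measurable ξ' → Measurable η' →
      Measure.map (fun ω => (ξ ω, η ω)) P = Measure.map (fun ω => (ξ' ω, η' ω)) P →
      d ξ η = d ξ' η')
    (ξ : Ω → X) (hξ : Measurable ξ)
    (ξs : ℕ → Ω → X) (hξs : ∀ n, Measurable (ξs n)) :
    Tendsto (fun n => minPM P d ξ (ξs n)) atTop (𝓝 0) ↔
    ∃ (ξ' : Ω → X) (ξs' : ℕ → Ω → X), Measurable ξ' ∧ (∀ n, Measurable (ξs' n)) ∧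
      Measure.map ξ' P = Measure.map ξ P ∧
      (∀ n, Measure.map (ξs' n) P = Measure.map (ξs n) P) ∧
      Tendsto (fun n => d ξ' (ξs' n)) atTop (𝓝 0) :=
  tendsto_minPM_zero_iff_general hrich hPM hξ hξs
end
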